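/- Let λ > 0, q₊ > 0, and x₀ < 0. Let Z₁ and Z₂ be standard Gumbel random variables and N a standard Gaussian random variable, with Z₁ and N independent. Then the random variable (1/(2λ))·ln(x₀²·λ) + (1/(2λ))·Z₁ + (1/λ)·ln(q₊) + (1/(2λ))·ln(2λ) + (1/λ)·(−ln|N|) has the same distribution as (1/λ)·ln(2λ·q₊·|x₀|) + (1/λ)·Z₂; equivalently, Z₁/2 − ln|N| has the same distribution as Z₂ + (ln 2)/2. -/

import Mathlib

open MeasureTheory ProbabilityTheory Filter Topology Set

lemma gci_half (a : ℝ) (ha : 0 < a) :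
    ∫ x in Ioi (0:ℝ), Real.exp (-(x - a / x) ^ 2 / 2) = √(2 * Real.pi) / 2 := by
  set φ : ℝ → ℝ := fun u => (u + √(u ^ 2 + 4 * a)) / 2 with hφ
  have hpos : ∀ u : ℝ, 0 < u ^ 2 + 4 * a := fun u => by positivity
  have hsq : ∀ u : ℝ, √(u ^ 2 + 4 * a) ^ 2 = u ^ 2 + 4 * a := fun u => Real.sq_sqrt (hpos u).le
  have hsp : ∀ u : ℝ, 0 < √(u ^ 2 + 4 * a) := fun u => Real.sqrt_pos.2 (hpos u)
  have habs : ∀ u : ℝ, |u| < √(u ^ 2 + 4 * a) := fun u => by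
    rw [← Real.sqrt_sq_eq_abs]
    exact Real.sqrt_lt_sqrt (sq_nonneg u) (by linarith)
  have hφpos : ∀ u, 0 < φ u := fun u => by
    have := (abs_lt.1 (habs u)).1
    simp only [hφ]; linarith
  have hinv : ∀ u, φ u - a / φ u = u := fun u => by
    have h := (hφpos u).ne'
    field_simp
    simp only [hφ]
    nlinarith [hsq u]
  have hinj : Function.Injective φ := fun u v h => by rw [← hinv u, ← hinv v, h]
  have himg : φ '' univ = Ioi 0 := by
    ext x
    simp only [image_univ, mem_range, mem_Ioi]
    constructor
    · rintro ⟨u, rfl⟩; exact hφpos u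
    · intro hx
      refine ⟨x - a / x, ?_⟩
      have : (x - a / x) ^ 2 + 4 * a = (x + a / x) ^ 2 := by field_simp; ring
      simp only [hφ]
      rw [this, Real.sqrt_sq (by positivity)]; ring
  have hder : ∀ u, HasDerivAt φ ((1 + u / √(u ^ 2 + 4 * a)) / 2) u := fun u => by
    have h1 : HasDerivAt (fun u : ℝ => u ^ 2 + 4 * a) (2 * u) u := by
      simpa using (hasDerivAt_pow 2 u).add_const (4 * a)
    have h2 := ((hasDerivAt_id u).add (h1.sqrt (hpos u).ne')).div_const 2
    refine h2.congr_deriv ?_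
    have := (hsp u).ne'
    field_simp
  have hbd : ∀ u : ℝ, |u / √(u ^ 2 + 4 * a)| ≤ 1 := fun u => by
    rw [abs_div, abs_of_pos (hsp u), div_le_one (hsp u)]
    exact (habs u).le
  rw [← himg, integral_image_eq_integral_abs_deriv_smul MeasurableSet.univ
    (fun u _ => (hder u).hasDerivWithinAt) hinj.injOn]
  simp only [hinv, smul_eq_mul, Measure.restrict_univ]
  have hG : Integrable (fun u : ℝ => Real.exp (-u ^ 2 / 2)) := by
    have := integrable_exp_neg_mul_sq (b := 1 / 2) (by norm_num)
    refine this.congr (ae_of_all _ fun u => ?_)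
    simp only; congr 1; ring
  have hGI : ∫ u : ℝ, Real.exp (-u ^ 2 / 2) = √(2 * Real.pi) := by
    have := integral_gaussian (1 / 2)
    rw [show Real.pi / (1 / 2) = 2 * Real.pi by ring] at this
    rw [← this]
    congr 1; ext u; congr 1; ring
  set g : ℝ → ℝ := fun u => |(1 + u / √(u ^ 2 + 4 * a)) / 2| * Real.exp (-u ^ 2 / 2) with hg
  have hgI : Integrable g := by
    refine hG.mono' ?_ (ae_of_all _ fun u => ?_)
    · apply Measurable.aestronglyMeasurable
      simp only [hg]
      fun_prop
    · have := abs_le.1 (hbd u)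
      simp only [hg, Real.norm_eq_abs, abs_mul, abs_abs, Real.abs_exp]
      apply mul_le_of_le_one_left (Real.exp_pos _).le
      rw [abs_le]; constructor <;> linarith
  have hsum : ∀ u, g u + g (-u) = Real.exp (-u ^ 2 / 2) := fun u => by
    have := abs_le.1 (hbd u)
    simp only [hg, neg_sq, neg_div]
    rw [abs_of_nonneg (by linarith), abs_of_nonneg (by linarith)]
    ring
  have h2 : ∫ u, (g u + g (-u)) = (∫ u, g u) + ∫ u, g u := by
    rw [integral_add hgI hgI.comp_neg, integral_neg_eq_self g]
  simp only [hsum, hGI] at h2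
  linarith

lemma gci_gauss (a : ℝ) (ha : 0 < a) :
    ∫ x, Real.exp (-(a ^ 2 / (2 * x ^ 2))) ∂(gaussianReal 0 1) = Real.exp (-a) := by
  rw [integral_gaussianReal_eq_integral_smul (by norm_num)]
  have h : ∀ x : ℝ, gaussianPDFReal 0 1 x • Real.exp (-(a ^ 2 / (2 * x ^ 2))) =
      (fun y => (√(2 * Real.pi))⁻¹ * Real.exp (-y ^ 2 / 2) * Real.exp (-(a ^ 2 / (2 * y ^ 2))))
        |x| := fun x => by
    simp [gaussianPDFReal]
  simp_rw [h]
  rw [integral_comp_abs (f := fun y => (√(2 * Real.pi))⁻¹ * Real.exp (-y ^ 2 / 2) *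
    Real.exp (-(a ^ 2 / (2 * y ^ 2))))]
  have h2 : ∫ x in Ioi (0:ℝ), (√(2 * Real.pi))⁻¹ * Real.exp (-x ^ 2 / 2) *
      Real.exp (-(a ^ 2 / (2 * x ^ 2))) =
      ∫ x in Ioi (0:ℝ), ((√(2 * Real.pi))⁻¹ * Real.exp (-a)) *
        Real.exp (-(x - a / x) ^ 2 / 2) := by
    refine setIntegral_congr_fun measurableSet_Ioi fun x hx => ?_
    have hx' : x ≠ 0 := (mem_Ioi.1 hx).ne'
    simp only [mul_assoc, ← Real.exp_add]
    congr 2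
    field_simp
    ring
  rw [h2, integral_const_mul, gci_half a ha]
  have : √(2 * Real.pi) ≠ 0 := by positivity
  field_simp

lemma gci_main
    {Ω : Type*} [MeasurableSpace Ω] (P : Measure Ω) [IsProbabilityMeasure P]
    {Ω' : Type*} [MeasurableSpace Ω'] (P' : Measure Ω') [IsProbabilityMeasure P']
    (Z₁ N : Ω → ℝ) (Z₂ : Ω' → ℝ)
    (hZ₁meas : Measurable Z₁) (hZ₂meas : Measurable Z₂) (hNmeas : Measurable N)
    (hZ₁ : ∀ x : ℝ, (P {ω | Z₁ ω ≤ x}).toReal = Real.exp (-Real.exp (-x)))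
    (hZ₂ : ∀ x : ℝ, (P' {ω' | Z₂ ω' ≤ x}).toReal = Real.exp (-Real.exp (-x)))
    (hN : Measure.map N P = gaussianReal 0 1)
    (hindep : IndepFun Z₁ N P) :
    Measure.map (fun ω => Z₁ ω / 2 - Real.log |N ω|) P
      = Measure.map (fun ω' => Z₂ ω' + Real.log 2 / 2) P' := by
  have hm1 : Measurable (fun ω => Z₁ ω / 2 - Real.log |N ω|) := by fun_prop
  have hm2 : Measurable (fun ω' => Z₂ ω' + Real.log 2 / 2) := by fun_prop
  have := Measure.isProbabilityMeasure_map (μ := P) hm1.aemeasurable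
  have := Measure.isProbabilityMeasure_map (μ := P) hZ₁meas.aemeasurable
  refine Measure.ext_of_Iic _ _ fun y => ?_
  have hR : P' {ω' | Z₂ ω' ≤ y - Real.log 2 / 2} =
      ENNReal.ofReal (Real.exp (-(√2 * Real.exp (-y)))) := by
    rw [← ENNReal.ofReal_toReal (measure_ne_top P' _), hZ₂]
    congr 3
    rw [show -(y - Real.log 2 / 2) = Real.log 2 / 2 + -y by ring, Real.exp_add,
      ← Real.log_sqrt (by norm_num), Real.exp_log (by positivity)]
  rw [Measure.map_apply hm2 measurableSet_Iic]
  have e2 : (fun ω' => Z₂ ω' + Real.log 2 / 2) ⁻¹' Iic y = {ω' | Z₂ ω' ≤ y - Real.log 2 / 2} := by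
    ext; simp [le_sub_iff_add_le]
  rw [e2, hR, Measure.map_apply hm1 measurableSet_Iic]
  set S : Set (ℝ × ℝ) := {p | p.2 / 2 - Real.log |p.1| ≤ y} with hS
  have hSm : MeasurableSet S := measurableSet_le (by fun_prop) measurable_const
  have e1 : (fun ω => Z₁ ω / 2 - Real.log |N ω|) ⁻¹' Iic y = (fun ω => (N ω, Z₁ ω)) ⁻¹' S := rfl
  rw [e1, ← Measure.map_apply (hNmeas.prodMk hZ₁meas) hSm,
    (indepFun_iff_map_prod_eq_prod_map_map hNmeas.aemeasurable hZ₁meas.aemeasurable).1 hindep.symm,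
    hN, Measure.prod_apply hSm, ← gci_gauss _ (by positivity),
    ofReal_integral_eq_lintegral_ofReal]
  · have hne : ∀ᵐ x ∂(gaussianReal 0 1), x ≠ 0 := by
      have := noAtoms_gaussianReal (μ := 0) (v := 1) (by norm_num)
      exact Measure.ae_ne _ 0
    refine lintegral_congr_ae ?_
    filter_upwards [hne] with x hx
    rw [Measure.map_apply hZ₁meas (measurable_prodMk_left hSm)]
    have : Z₁ ⁻¹' (Prod.mk x ⁻¹' S) = {ω | Z₁ ω ≤ 2 * (y + Real.log |x|)} := by
      ext ω
      simp only [hS, mem_preimage, mem_setOf_eq]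
      constructor <;> intro h <;> linarith
    rw [this, ← ENNReal.ofReal_toReal (measure_ne_top P _), hZ₁]
    congr 3
    have hx' : 0 < |x| := abs_pos.2 hx
    rw [show -(2 * (y + Real.log |x|)) = (-y + -y) + -(Real.log |x| + Real.log |x|) by ring,
      Real.exp_add, Real.exp_neg (_ + _), Real.exp_add, Real.exp_add, Real.exp_log hx',
      abs_mul_abs_self, mul_pow, Real.sq_sqrt (by norm_num)]
    field_simp
  · refine (integrable_const (1:ℝ)).mono' (Measurable.aestronglyMeasurable (by fun_prop))
      (ae_of_all _ fun x => ?_)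
    rw [Real.norm_eq_abs, Real.abs_exp, Real.exp_le_one_iff]
    have : 0 ≤ (√2 * Real.exp (-y)) ^ 2 / (2 * x ^ 2) := by positivity
    linarith
  · exact ae_of_all _ fun x => (Real.exp_pos _).le

/-- Convolution identity for the limit laws: if `Z₁, Z₂` are standard Gumbel, `N` is
standard Gaussian, and `Z₁` and `N` are independent, then for `λ > 0`, `q₊ > 0`, `x₀ < 0`,
`(1/(2λ)) ln(x₀² λ) + (1/(2λ)) Z₁ + (1/λ) ln q₊ + (1/(2λ)) ln(2λ) + (1/λ)(-ln |N|)`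
has the same distribution as `(1/λ) ln(2 λ q₊ |x₀|) + (1/λ) Z₂`; equivalently,
`Z₁/2 - ln |N|` has the same distribution as `Z₂ + (ln 2)/2`. -/
theorem gumbel_convolution_identity
    {Ω : Type*} [MeasurableSpace Ω] (P : Measure Ω) [IsProbabilityMeasure P]
    {Ω' : Type*} [MeasurableSpace Ω'] (P' : Measure Ω') [IsProbabilityMeasure P']
    (lam qp x₀ : ℝ) (hlam : 0 < lam) (hqp : 0 < qp) (hx₀ : x₀ < 0)
    (Z₁ N : Ω → ℝ) (Z₂ : Ω' → ℝ)
    (hZ₁meas : Measurable Z₁) (hZ₂meas : Measurable Z₂) (hNmeas : Measurable N)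
    (hZ₁ : ∀ x : ℝ, (P {ω | Z₁ ω ≤ x}).toReal = Real.exp (-Real.exp (-x)))
    (hZ₂ : ∀ x : ℝ, (P' {ω' | Z₂ ω' ≤ x}).toReal = Real.exp (-Real.exp (-x)))
    (hN : Measure.map N P = gaussianReal 0 1)
    (hindep : IndepFun Z₁ N P) :
    Measure.map (fun ω => (1 / (2 * lam)) * Real.log (x₀ ^ 2 * lam) + (1 / (2 * lam)) * Z₁ ω
        + (1 / lam) * Real.log qp + (1 / (2 * lam)) * Real.log (2 * lam)
        + (1 / lam) * (-Real.log |N ω|)) P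
      = Measure.map (fun ω' => (1 / lam) * Real.log (2 * lam * qp * |x₀|)
          + (1 / lam) * Z₂ ω') P' ∧
    Measure.map (fun ω => Z₁ ω / 2 - Real.log |N ω|) P
      = Measure.map (fun ω' => Z₂ ω' + Real.log 2 / 2) P' := by
  have key := gci_main P P' Z₁ N Z₂ hZ₁meas hZ₂meas hNmeas hZ₁ hZ₂ hN hindep
  refine ⟨?_, key⟩
  have hm1 : Measurable (fun ω => Z₁ ω / 2 - Real.log |N ω|) := by fun_prop
  have hm2 : Measurable (fun ω' => Z₂ ω' + Real.log 2 / 2) := by fun_prop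
  set c : ℝ := (1 / lam) * (Real.log |x₀| + Real.log lam + Real.log 2 / 2 + Real.log qp) with hc
  have hf : Measurable (fun t : ℝ => c + (1 / lam) * t) := by fun_prop
  have k2 := congrArg (Measure.map (fun t : ℝ => c + (1 / lam) * t)) key
  rw [Measure.map_map hf hm1, Measure.map_map hf hm2] at k2
  have hx : |x₀| ≠ 0 := abs_ne_zero.2 hx₀.ne
  convert k2 using 2
  · ext ω
    simp only [Function.comp, hc]
    rw [← sq_abs, Real.log_mul (pow_ne_zero 2 hx) hlam.ne', Real.log_pow,
      Real.log_mul (by norm_num) hlam.ne']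
    field_simp
    push_cast
    ring
  · ext ω
    simp only [Function.comp, hc]
    rw [Real.log_mul (by positivity) hx, Real.log_mul (by positivity) hqp.ne',
      Real.log_mul (by norm_num) hlam.ne']
    ring
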